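/- arXiv:2207.14210 — 3 statements merged into one kernel-verified Lean document; each statement's English description precedes it below -/
import Mathlib

section
/- Let A be a finite set of nonzero integers with |A| = n and let M ≥ 1 be an integer. Then there exist a finite set B of nonzero integers and a map φ : A ∪ {0} → B ∪ {0} that is a Freiman isomorphism of order M with φ(0) = 0 and such that every b ∈ B satisfies |b| ≤ (8M)^n. -/
/-! Write `c · x` for `∑ i, c i * x i`. A coincidence between two sums of `M` elements of `A ∪ {0}`
is an equation `c · a = 0`, where `a` lists the elements of `A` and `c` is an integer vector with
`∑ i, |c i| ≤ 2 * M`; the occurrences of `0` contribute nothing. So it is enough to find a small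
integer vector `y` such that `c · a = 0 ↔ c · y = 0` for every such `c`.

Consider the rational polyhedron of all `x` with `c · x ≥ 1` whenever `c · a > 0`, and `c · x ≥ 0`
whenever `c · a = 0` (hence `c · x = 0`, as `-c` is also admissible). It contains `a`, and it
contains no line because one of `± eᵢ` is among the constraints for each `i`. Hence it has a vertex
(`exists_vertex`): a point at which the tight constraints span the whole space. Choosing `n`
independent tight constraints as rows of a matrix `C`, the vertex solves `C x = ε` with
`ε ∈ {0, 1}ⁿ`, so by Cramer's rule `y = det C • x` is an integer vector, with the same vanishing
pattern as `x`. Its entries are determinants of matrices whose rows have `ℓ¹` norm at most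
`2 * M + 1`, so they are bounded by `(2 * M + 1) ^ n` (`abs_det_le_pow`). -/

open Matrix in
/-- The determinant is bounded by the product of the `ℓ¹` norms of the rows: the product, once
expanded, runs over all maps `ι → ι` rather than only over permutations. -/
lemma abs_det_le_prod {ι : Type*} [Fintype ι] [DecidableEq ι] (C : Matrix ι ι ℤ) :
    |C.det| ≤ ∏ i, ∑ j, |C i j| := by
  rw [← Matrix.det_transpose, Matrix.det_apply, Finset.prod_univ_sum]
  refine (Finset.abs_sum_le_sum_abs _ _).trans ?_
  calc ∑ σ : Equiv.Perm ι, |Equiv.Perm.sign σ • ∏ i, Cᵀ (σ i) i|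
      = ∑ σ : Equiv.Perm ι, ∏ i, |C i (σ i)| := by
        refine Finset.sum_congr rfl fun σ _ => ?_
        rw [Units.smul_def, smul_eq_mul, abs_mul, Finset.abs_prod]
        simp
    _ = ∑ f ∈ (Finset.univ : Finset (Equiv.Perm ι)).image (fun σ i => σ i),
          ∏ i, |C i (f i)| := by
        rw [Finset.sum_image]
        intro σ _ τ _ h
        exact DFunLike.coe_injective h
    _ ≤ _ := by
        refine Finset.sum_le_sum_of_subset_of_nonneg ?_ ?_
        · intro f _
          simp
        · intro f _ _
          exact Finset.prod_nonneg fun i _ => abs_nonneg _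

lemma abs_det_le_pow {ι : Type*} [Fintype ι] [DecidableEq ι] (C : Matrix ι ι ℤ) (K : ℤ)
    (h : ∀ i, ∑ j, |C i j| ≤ K) : |C.det| ≤ K ^ Fintype.card ι := by
  refine (abs_det_le_prod C).trans ?_
  refine (Finset.prod_le_prod (fun i _ => Finset.sum_nonneg fun j _ => abs_nonneg _)
    fun i _ => h i).trans ?_
  simp

open Matrix in
/-- A feasible point at which the tight constraints do not span can be moved, orthogonally to all
of them, until one more constraint becomes tight. The hypothesis `hS` excludes lines in the
polyhedron. -/
lemma exists_more_tight {ι : Type*} [Fintype ι] [DecidableEq ι] (S : Finset (ι → ℚ))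
    (ε : (ι → ℚ) → ℚ) (hS : ∀ i, Pi.single i 1 ∈ S ∨ -Pi.single i 1 ∈ S)
    (x : ι → ℚ) (hx : ∀ c ∈ S, ε c ≤ c ⬝ᵥ x)
    (hspan : Submodule.span ℚ {c | c ∈ S ∧ c ⬝ᵥ x = ε c} ≠ ⊤) :
    ∃ x' : ι → ℚ, (∀ c ∈ S, ε c ≤ c ⬝ᵥ x') ∧
      (S.filter fun c => c ⬝ᵥ x = ε c).card < (S.filter fun c => c ⬝ᵥ x' = ε c).card := by
  obtain ⟨f, hf0, hf⟩ := Submodule.exists_le_ker_of_lt_top _ (lt_top_iff_ne_top.2 hspan)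
  have hfv : ∀ c : ι → ℚ, f c = c ⬝ᵥ fun i => f (Pi.single i 1) := by
    intro c
    conv_lhs => rw [pi_eq_sum_univ' c]
    simp [dotProduct]
  -- A direction orthogonal to the tight constraints that decreases some other constraint.
  have hv : ∃ v : ι → ℚ, (∀ c ∈ S, c ⬝ᵥ x = ε c → c ⬝ᵥ v = 0) ∧ ∃ c ∈ S, c ⬝ᵥ v < 0 := by
    set w : ι → ℚ := fun i => f (Pi.single i 1) with hw
    have hw0 : ∀ c ∈ S, c ⬝ᵥ x = ε c → c ⬝ᵥ w = 0 := by
      intro c hc h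
      rw [← hfv]
      exact hf (Submodule.subset_span ⟨hc, h⟩)
    have hne : ∃ i, w i ≠ 0 := by
      by_contra! h
      apply hf0
      ext i
      simpa using h i
    obtain ⟨i, hi⟩ := hne
    have hc : ∃ c ∈ S, c ⬝ᵥ w ≠ 0 := by
      rcases hS i with h | h
      · exact ⟨_, h, by simpa using hi⟩
      · exact ⟨_, h, by simpa using hi⟩
    obtain ⟨c, hcS, hc⟩ := hc
    rcases lt_or_gt_of_ne hc with h | h
    · exact ⟨w, hw0, c, hcS, h⟩
    · exact ⟨-w, fun c hc h => by simpa using hw0 c hc h, c, hcS, by simpa using h⟩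
  obtain ⟨v, hv0, c₀, hc₀, hc₀v⟩ := hv
  obtain ⟨c₁, hc₁, hmin⟩ := Finset.exists_min_image (S.filter fun c => c ⬝ᵥ v < 0)
    (fun c => (c ⬝ᵥ x - ε c) / (-(c ⬝ᵥ v))) ⟨c₀, by simp [hc₀, hc₀v]⟩
  rw [Finset.mem_filter] at hc₁
  obtain ⟨hc₁, hc₁v⟩ := hc₁
  set t := (c₁ ⬝ᵥ x - ε c₁) / (-(c₁ ⬝ᵥ v)) with ht
  have ht0 : 0 ≤ t := div_nonneg (by linarith [hx c₁ hc₁]) (by linarith)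
  refine ⟨x + t • v, ?_, ?_⟩
  · intro c hc
    rw [dotProduct_add, dotProduct_smul, smul_eq_mul]
    rcases lt_or_ge (c ⬝ᵥ v) 0 with h | h
    · have := hmin c (by simp [hc, h])
      rw [le_div_iff₀ (by linarith)] at this
      linarith
    · have := mul_nonneg ht0 h
      linarith [hx c hc]
  · apply Finset.card_lt_card
    rw [Finset.ssubset_iff_of_subset]
    · refine ⟨c₁, ?_, ?_⟩
      · rw [Finset.mem_filter]
        refine ⟨hc₁, ?_⟩
        rw [dotProduct_add, dotProduct_smul, smul_eq_mul]
        have : t * (-(c₁ ⬝ᵥ v)) = c₁ ⬝ᵥ x - ε c₁ := div_mul_cancel₀ _ (by linarith)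
        linarith
      · rw [Finset.mem_filter]
        rintro ⟨_, h⟩
        exact hc₁v.ne (hv0 c₁ hc₁ h)
    · intro c hc
      rw [Finset.mem_filter] at hc ⊢
      refine ⟨hc.1, ?_⟩
      rw [dotProduct_add, dotProduct_smul, hv0 c hc.1 hc.2, hc.2]
      simp

open Matrix in
/-- A nonempty polyhedron without lines has a vertex. -/
lemma exists_vertex {ι : Type*} [Fintype ι] [DecidableEq ι] (S : Finset (ι → ℚ))
    (ε : (ι → ℚ) → ℚ) (hS : ∀ i, Pi.single i 1 ∈ S ∨ -Pi.single i 1 ∈ S)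
    (x₀ : ι → ℚ) (hx₀ : ∀ c ∈ S, ε c ≤ c ⬝ᵥ x₀) :
    ∃ x : ι → ℚ, (∀ c ∈ S, ε c ≤ c ⬝ᵥ x) ∧
      Submodule.span ℚ {c | c ∈ S ∧ c ⬝ᵥ x = ε c} = ⊤ := by
  by_contra! hcon
  have key : ∀ k : ℕ, ∃ x : ι → ℚ, (∀ c ∈ S, ε c ≤ c ⬝ᵥ x) ∧
      k ≤ (S.filter fun c => c ⬝ᵥ x = ε c).card := by
    intro k
    induction k with
    | zero => exact ⟨x₀, hx₀, Nat.zero_le _⟩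
    | succ k ih =>
      obtain ⟨x, hx, hk⟩ := ih
      obtain ⟨x', hx', hlt⟩ := exists_more_tight S ε hS x hx (hcon x hx)
      exact ⟨x', hx', by omega⟩
  obtain ⟨x, _, hx⟩ := key (S.card + 1)
  have := Finset.card_filter_le S (fun c => c ⬝ᵥ x = ε c)
  omega

open Matrix in
/-- A small integer vector `y` satisfying exactly the same short integer relations as `a`. -/
lemma exists_small_vector {ι : Type*} [Fintype ι] [DecidableEq ι] (a : ι → ℤ) (M : ℕ)
    (hM : 1 ≤ M) :
    ∃ y : ι → ℤ, (∀ c : ι → ℤ, ∑ i, |c i| ≤ 2 * M → (c ⬝ᵥ y = 0 ↔ c ⬝ᵥ a = 0)) ∧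
      ∀ i, |y i| ≤ (2 * M + 1 : ℤ) ^ Fintype.card ι := by
  classical
  let q : (ι → ℤ) → (ι → ℚ) := fun c i => (c i : ℚ)
  have hq : ∀ c d : ι → ℤ, q c ⬝ᵥ q d = ((c ⬝ᵥ d : ℤ) : ℚ) := by
    intro c d
    simp [q, dotProduct]
  let R : Finset (ι → ℤ) :=
    (Fintype.piFinset fun _ : ι => Finset.Icc (-(2 * M : ℤ)) (2 * M)).filter
      fun c => ∑ i, |c i| ≤ 2 * M ∧ 0 ≤ c ⬝ᵥ a
  have hR : ∀ c, c ∈ R ↔ ∑ i, |c i| ≤ 2 * M ∧ 0 ≤ c ⬝ᵥ a := by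
    intro c
    simp only [R, Finset.mem_filter, Fintype.mem_piFinset, Finset.mem_Icc, and_iff_right_iff_imp]
    rintro ⟨h, _⟩ i
    have := Finset.single_le_sum (f := fun i => |c i|) (fun j _ => abs_nonneg _)
      (Finset.mem_univ i)
    exact abs_le.1 (this.trans h)
  let ε : (ι → ℚ) → ℚ := fun c => if c ⬝ᵥ q a = 0 then 0 else 1
  obtain ⟨x, hx, hspan⟩ := exists_vertex (R.image q) ε (by
    intro i
    have h1 : ∑ j, |(Pi.single i 1 : ι → ℤ) j| ≤ 2 * M := by
      have : ∀ j, |(Pi.single i 1 : ι → ℤ) j| = if j = i then 1 else 0 := by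
        intro j
        rw [Pi.single_apply]
        split_ifs <;> simp
      simp only [this, Finset.sum_ite_eq', Finset.mem_univ, if_true]
      omega
    have h2 : q (Pi.single i 1) = Pi.single i 1 := by
      ext j
      simp only [q, Pi.single_apply]
      split_ifs <;> simp
    rcases le_total 0 (a i) with h | h
    · left
      refine Finset.mem_image.2 ⟨Pi.single i 1, (hR _).2 ⟨h1, by simpa using h⟩, h2⟩
    · right
      refine Finset.mem_image.2 ⟨-Pi.single i 1, (hR _).2 ⟨by simpa using h1, by simpa using h⟩, ?_⟩
      rw [← h2]
      ext j
      simp [q]) (q a) (by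
    intro c hc
    obtain ⟨c, hcR, rfl⟩ := Finset.mem_image.1 hc
    have h := ((hR c).1 hcR).2
    simp only [ε, hq]
    split_ifs with h0
    · exact_mod_cast h
    · have h0' : c ⬝ᵥ a ≠ 0 := by exact_mod_cast h0
      have : 1 ≤ c ⬝ᵥ a := by omega
      exact_mod_cast this)
  have hx' : ∀ c : ι → ℤ, ∑ i, |c i| ≤ 2 * M → (q c ⬝ᵥ x = 0 ↔ c ⬝ᵥ a = 0) := by
    intro c hc
    have hneg : q (-c) = -q c := by
      ext j
      simp [q]
    have hpos : ∀ c ∈ R, c ⬝ᵥ a ≠ 0 → 1 ≤ q c ⬝ᵥ x := by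
      intro c hc h
      have h3 := hx (q c) (Finset.mem_image_of_mem _ hc)
      have h4 : ((c ⬝ᵥ a : ℤ) : ℚ) ≠ 0 := by exact_mod_cast h
      simpa only [ε, hq, if_neg h4] using h3
    have hzero : ∀ c ∈ R, c ⬝ᵥ a = 0 → 0 ≤ q c ⬝ᵥ x := by
      intro c hc h
      have h3 := hx (q c) (Finset.mem_image_of_mem _ hc)
      simpa only [ε, hq, h, Int.cast_zero, if_true] using h3
    have hc' : ∑ i, |(-c) i| ≤ 2 * M := by simpa using hc
    constructor
    · intro h
      by_contra h0
      rcases lt_or_gt_of_ne h0 with h1 | h1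
      · have := hpos (-c) ((hR _).2 ⟨hc', by simpa using h1.le⟩) (by simpa using h0)
        rw [hneg, neg_dotProduct] at this
        linarith
      · have := hpos c ((hR _).2 ⟨hc, h1.le⟩) h0
        linarith
    · intro h
      have h1 := hzero c ((hR _).2 ⟨hc, h.ge⟩) h
      have h2 := hzero (-c) ((hR _).2 ⟨hc', by simp [h]⟩) (by simpa using h)
      rw [hneg, neg_dotProduct] at h2
      linarith
  -- A square system of independent tight constraints, with integer coefficients.
  obtain ⟨C, e, hCR, he, hCx, hdet⟩ : ∃ (C : Matrix ι ι ℤ) (e : ι → ℤ), (∀ k, C k ∈ R) ∧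
      (∀ k, |e k| ≤ 1) ∧ (∀ k, q (C k) ⬝ᵥ x = e k) ∧ C.det ≠ 0 := by
    obtain ⟨f, hf, -, hli⟩ := Submodule.exists_fun_fin_finrank_span_eq ℚ
      {c | c ∈ R.image q ∧ c ⬝ᵥ x = ε c}
    have hfin : Fintype.card ι = Module.finrank ℚ (Submodule.span ℚ
        {c | c ∈ R.image q ∧ c ⬝ᵥ x = ε c}) := by
      rw [hspan, finrank_top, Module.finrank_fintype_fun_eq_card]
    let g : ι ≃ Fin _ := (Fintype.equivFinOfCardEq hfin)
    have hC : ∀ k, ∃ c ∈ R, q c = f (g k) := fun k => Finset.mem_image.1 (hf (g k)).1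
    choose C hCR hC using hC
    refine ⟨C, fun k => if C k ⬝ᵥ a = 0 then 0 else 1, hCR, ?_, ?_, ?_⟩
    · intro k
      dsimp only
      split_ifs <;> simp
    · intro k
      have h := (hf (g k)).2
      rw [← hC] at h
      rw [h]
      simp only [ε, hq]
      by_cases h0 : C k ⬝ᵥ a = 0
      · simp [h0]
      · simp [h0]
    · have hli' : LinearIndependent ℚ ((Matrix.of C).map (Int.cast : ℤ → ℚ)).row := by
        have hrow : ((Matrix.of C).map (Int.cast : ℤ → ℚ)).row = f ∘ g := by
          ext k j
          rw [Function.comp_apply, ← hC]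
          rfl
        rw [hrow]
        exact hli.comp g g.injective
      have hu := Matrix.linearIndependent_rows_iff_isUnit.1 hli'
      rw [Matrix.isUnit_iff_isUnit_det, isUnit_iff_ne_zero] at hu
      intro h0
      apply hu
      have := Int.cast_det (R := ℚ) (Matrix.of C)
      rw [← this]
      exact_mod_cast h0
  let Cq : Matrix ι ι ℚ := C.map (Int.cast : ℤ → ℚ)
  have hdetq : Cq.det = (C.det : ℚ) := (Int.cast_det (R := ℚ) C).symm
  have hdetq0 : Cq.det ≠ 0 := by
    rw [hdetq]
    exact_mod_cast hdet
  have hy : q (C.cramer e) = Cq.det • x := by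
    have hinj := Matrix.mulVec_injective_of_isUnit
      ((Matrix.isUnit_iff_isUnit_det Cq).2 (isUnit_iff_ne_zero.2 hdetq0))
    apply hinj
    ext k
    rw [Matrix.mulVec_smul, Pi.smul_apply, smul_eq_mul]
    have h1 : (Cq *ᵥ q (C.cramer e)) k = ((C *ᵥ C.cramer e) k : ℤ) := hq (C k) _
    have h2 : (Cq *ᵥ x) k = e k := hCx k
    rw [h1, h2, Matrix.mulVec_cramer, hdetq]
    simp
  refine ⟨C.cramer e, ?_, ?_⟩
  · intro c hc
    rw [← hx' c hc]
    have h : ((c ⬝ᵥ C.cramer e : ℤ) : ℚ) = Cq.det * (q c ⬝ᵥ x) := by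
      rw [← hq, hy, dotProduct_smul, smul_eq_mul]
    rw [← Int.cast_eq_zero (α := ℚ), h]
    simp [hdetq0]
  · intro i
    rw [Matrix.cramer_apply]
    apply abs_det_le_pow
    intro k
    have h1 := ((hR _).1 (hCR k)).1
    have h2 : ∀ j, |C.updateCol i e k j| ≤ |C k j| + if j = i then 1 else 0 := by
      intro j
      rw [Matrix.updateCol_apply]
      split_ifs with h
      · have := he k
        have := abs_nonneg (C k j)
        omega
      · simp
    refine (Finset.sum_le_sum fun j _ => h2 j).trans ?_
    rw [Finset.sum_add_distrib]
    simpa using h1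

/-- Elements of `s` outside `A` can only be `0`, so they do not contribute to the sum. -/
lemma sum_map_eq_sum_count (A : Finset ℤ) (hA : ∀ a ∈ A, a ≠ 0) (f : ℤ → ℤ) (hf : f 0 = 0)
    (s : Multiset ℤ) (hs : ∀ x ∈ s, x ∈ insert (0 : ℤ) (A : Set ℤ)) :
    (s.map f).sum = ∑ a : A, (s.count (a : ℤ) : ℤ) * f a := by
  rw [Finset.sum_coe_sort A (fun a => (s.count a : ℤ) * f a),
    Finset.sum_multiset_map_count]
  simp only [nsmul_eq_mul]
  have h1 : s.toFinset ⊆ insert 0 A := by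
    intro x hx
    simpa using hs x (Multiset.mem_toFinset.1 hx)
  rw [Finset.sum_subset h1, Finset.sum_insert (fun h => hA 0 h rfl), hf, mul_zero, zero_add]
  intro x _ hx
  rw [Multiset.mem_toFinset] at hx
  simp [Multiset.count_eq_zero_of_notMem hx]

lemma sum_count_le_card (A : Finset ℤ) (s : Multiset ℤ) :
    ∑ a : A, (s.count (a : ℤ) : ℤ) ≤ s.card := by
  rw [Finset.sum_coe_sort A (fun a => (s.count a : ℤ))]
  have h := Multiset.toFinset_sum_count_eq s
  calc ∑ a ∈ A, (s.count a : ℤ) ≤ ∑ a ∈ A ∪ s.toFinset, (s.count a : ℤ) :=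
        Finset.sum_le_sum_of_subset_of_nonneg Finset.subset_union_left (fun _ _ _ => by positivity)
    _ = ∑ a ∈ s.toFinset, (s.count a : ℤ) := by
        symm
        apply Finset.sum_subset Finset.subset_union_right
        intro x _ hx
        rw [Multiset.mem_toFinset] at hx
        simp [Multiset.count_eq_zero_of_notMem hx]
    _ = s.card := by exact_mod_cast h

theorem freiman_isomorphic_to_small_set (A : Finset ℤ) (n : ℕ) (hcard : A.card = n)
    (hA : ∀ a ∈ A, a ≠ 0) (M : ℕ) (hM : 1 ≤ M) :
    ∃ (B : Finset ℤ) (φ : ℤ → ℤ),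
      (∀ b ∈ B, b ≠ 0) ∧
      IsAddFreimanIso M (insert (0 : ℤ) (A : Set ℤ)) (insert (0 : ℤ) (B : Set ℤ)) φ ∧
      φ 0 = 0 ∧
      ∀ b ∈ B, |b| ≤ (8 * M : ℤ) ^ n := by
  classical
  obtain ⟨y, hy, hbound⟩ := exists_small_vector (fun a : A => (a : ℤ)) M hM
  rw [Fintype.card_coe, hcard] at hbound
  let φ : ℤ → ℤ := fun x => if h : x ∈ A then y ⟨x, h⟩ else 0
  have hφ0 : φ 0 = 0 := dif_neg fun h => hA 0 h rfl
  have hφ : ∀ a : A, φ a = y a := fun a => dif_pos a.2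
  have key : ∀ s t : Multiset ℤ, (∀ x ∈ s, x ∈ insert (0 : ℤ) (A : Set ℤ)) →
      (∀ x ∈ t, x ∈ insert (0 : ℤ) (A : Set ℤ)) → s.card ≤ M → t.card ≤ M →
      ((s.map φ).sum = (t.map φ).sum ↔ s.sum = t.sum) := by
    intro s t hs ht hsM htM
    have hc := hy (fun a => (s.count (a : ℤ) : ℤ) - t.count (a : ℤ)) (by
      calc ∑ a : A, |(s.count (a : ℤ) : ℤ) - t.count (a : ℤ)|
          ≤ ∑ a : A, ((s.count (a : ℤ) : ℤ) + t.count (a : ℤ)) := by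
            refine Finset.sum_le_sum fun a _ => ?_
            rw [abs_le]
            constructor <;> omega
        _ ≤ 2 * M := by
            rw [Finset.sum_add_distrib]
            have h1 := sum_count_le_card A s
            have h2 := sum_count_le_card A t
            omega)
    have hs' := sum_map_eq_sum_count A hA id rfl s hs
    have ht' := sum_map_eq_sum_count A hA id rfl t ht
    rw [Multiset.map_id] at hs' ht'
    rw [sum_map_eq_sum_count A hA φ hφ0 s hs, sum_map_eq_sum_count A hA φ hφ0 t ht, hs', ht',
      ← sub_eq_zero, ← Finset.sum_sub_distrib]
    conv_rhs => rw [← sub_eq_zero, ← Finset.sum_sub_distrib]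
    simpa only [dotProduct, sub_mul, hφ, id] using hc
  have hinj : Set.InjOn φ (insert (0 : ℤ) (A : Set ℤ)) := by
    intro u hu v hv h
    have := (key {u} {v} (by simpa using hu) (by simpa using hv) (by simpa using hM)
      (by simpa using hM)).1 (by simpa using h)
    simpa using this
  refine ⟨A.image φ, φ, ?_, ⟨?_, ?_⟩, hφ0, ?_⟩
  · intro b hb h0
    obtain ⟨a, ha, rfl⟩ := Finset.mem_image.1 hb
    exact hA a ha (hinj (Set.mem_insert_of_mem _ ha) (Set.mem_insert _ _) (h0.trans hφ0.symm))
  · have : insert (0 : ℤ) ((A.image φ : Finset ℤ) : Set ℤ) = φ '' insert (0 : ℤ) (A : Set ℤ) := by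
      rw [Set.image_insert_eq, hφ0, Finset.coe_image]
    rw [this]
    exact hinj.bijOn_image
  · intro s t hs ht hsM htM
    exact key s t (fun x hx => hs hx) (fun x hx => ht hx) hsM.le htM.le
  · intro b hb
    obtain ⟨a, ha, rfl⟩ := Finset.mem_image.1 hb
    rw [hφ ⟨a, ha⟩]
    refine (hbound _).trans ?_
    gcongr
    omega
end

section
/- For every δ > 0 there exists C > 0 with the following property. Let K be a positive integer and let A be a finite nonempty set of positive integers with |A| = n. Set M = sup_{x∈ℝ} Σ_{a∈A} S_K(a·x). Then the Lebesgue measure of the set {x ∈ [0, 1) : Σ_{a∈A} S_K(a·x) ≥ M − δ} is at least exp(−K·n·log(C·δ⁻¹·n·K)). -/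
/-!
The near-maximum set contains a translate, modulo `1`, of a large piece of a Bohr set.

The polynomial `Sel K` is `1`-periodic and, by the crude bounds on the Fejér kernel
(`abs_fejer_le`, `abs_fejer_sub_le`), Lipschitz with constant `134 (K + 1) ^ 2` (`abs_Sel_sub_le`).
Split `(0, 1]` into `N ^ n` cells according to the position of the fractional parts of `a x`,
`a ∈ A`, among `N` equal intervals. By pigeonhole (`exists_large_cell`) some cell `E` has measure at
least `N ^ (-n)`. Translate `E` so that one of its points `x₀` moves to a near-maximiser `x₁`.
For `x ∈ E`, `a (x - x₀)` is within `1 / N` of an integer for every `a ∈ A`, so the sum at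
`x + (x₁ - x₀)` differs from its value at `x₁` by at most `n · 134 (K + 1) ^ 2 / N`, which is at
most `δ / 2` if `N` is about `268 n (K + 1) ^ 2 / δ`. Since `(K + 1) ^ 2 ≤ 4 ^ K`, this `N` is at
most `(C δ⁻¹ n K) ^ K` for a suitable `C` (`nat_ceil_le_pow`), so a Bohr set of rank `n`, rather
than `K n`, suffices.
-/

open Real

/-- The Fejér kernel `Δ_K(x) = ∑_{|k| ≤ K} (1 − |k|/K) e(kx)`, written via cosines
(the imaginary parts cancel by symmetry). -/
noncomputable def Δ (K : ℕ) (x : ℝ) : ℝ :=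
  ∑ k ∈ Finset.Icc (-(K : ℤ)) (K : ℤ), (1 - |(k : ℝ)| / K) * Real.cos (2 * π * k * x)

/-- The Vaaler polynomial `V_K`. -/
noncomputable def V (K : ℕ) (x : ℝ) : ℝ :=
  (1 / ((K : ℝ) + 1)) *
      ∑ k ∈ Finset.Icc 1 K, ((k : ℝ) / (K + 1) - 1 / 2) * Δ (K + 1) (x - k / (K + 1))
    + (1 / (2 * π * (K + 1))) * Real.sin (2 * π * (K + 1) * x)
    - (1 / (2 * π)) * Δ (K + 1) x * Real.sin (2 * π * x)

/-- The Beurling–Selberg function `B_K`. -/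
noncomputable def B (K : ℕ) (x : ℝ) : ℝ := V K x + (1 / (2 * ((K : ℝ) + 1))) * Δ (K + 1) x

/-- The Selberg polynomial `S_K`, a minorant of `1_{[1/3,2/3)} - 1/3`. -/
noncomputable def Sel (K : ℕ) (x : ℝ) : ℝ := 1 / 3 - B K (2 / 3 - x) - B K (x - 1 / 3)

/-! ### Lipschitz bounds for the Selberg polynomial -/

/-- The trivial bound on the Fejér kernel: `2 K + 1` terms, each at most `1`. -/
lemma abs_fejer_le {K : ℕ} (hK : 0 < K) (x : ℝ) : |Δ K x| ≤ 2 * K + 1 := by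
  have hK' : (0 : ℝ) < K := by exact_mod_cast hK
  unfold Δ
  calc _ ≤ ∑ k ∈ Finset.Icc (-(K : ℤ)) (K : ℤ), (1 : ℝ) := by
        refine (Finset.abs_sum_le_sum_abs _ _).trans (Finset.sum_le_sum fun k hk => ?_)
        rw [Finset.mem_Icc] at hk
        have hk' : |(k : ℝ)| ≤ K := by exact_mod_cast abs_le.2 hk
        have h1 : |(k : ℝ)| / K ≤ 1 := (div_le_one hK').2 hk'
        have h0 : 0 ≤ |(k : ℝ)| / K := by positivity
        rw [abs_mul]
        exact mul_le_one₀ (abs_le.2 ⟨by linarith, by linarith⟩) (abs_nonneg _)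
          (Real.abs_cos_le_one _)
    _ = 2 * K + 1 := by
        have h : ((K : ℤ) + 1 - -(K : ℤ)).toNat = 2 * K + 1 := by omega
        simp only [Finset.sum_const, Int.card_Icc, h, nsmul_eq_mul, mul_one]
        push_cast; ring

lemma abs_fejer_sub_le {K : ℕ} (hK : 0 < K) (x y : ℝ) :
    |Δ K x - Δ K y| ≤ (2 * K + 1) * (2 * π * K) * |x - y| := by
  have hK' : (0 : ℝ) < K := by exact_mod_cast hK
  unfold Δ
  rw [← Finset.sum_sub_distrib]
  calc _ ≤ ∑ k ∈ Finset.Icc (-(K : ℤ)) (K : ℤ), (2 * π * K * |x - y|) := by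
        refine (Finset.abs_sum_le_sum_abs _ _).trans (Finset.sum_le_sum fun k hk => ?_)
        rw [Finset.mem_Icc] at hk
        have hk' : |(k : ℝ)| ≤ K := by exact_mod_cast abs_le.2 hk
        have h1 : |(k : ℝ)| / K ≤ 1 := (div_le_one hK').2 hk'
        have h0 : 0 ≤ |(k : ℝ)| / K := by positivity
        have h2 : |1 - |(k : ℝ)| / K| ≤ 1 := abs_le.2 ⟨by linarith, by linarith⟩
        have h3 : |Real.cos (2 * π * k * x) - Real.cos (2 * π * k * y)|
            ≤ 2 * π * K * |x - y| := by
          refine (abs_cos_sub_cos_le _ _).trans ?_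
          rw [← mul_sub, abs_mul, abs_mul, abs_of_pos Real.two_pi_pos]
          gcongr
        rw [← mul_sub, abs_mul]
        calc _ ≤ 1 * (2 * π * K * |x - y|) := by gcongr
          _ = _ := one_mul _
    _ = _ := by
        have h : ((K : ℤ) + 1 - -(K : ℤ)).toNat = 2 * K + 1 := by omega
        simp only [Finset.sum_const, Int.card_Icc, h, nsmul_eq_mul]
        push_cast; ring

lemma abs_fejer_succ_sub_le (K : ℕ) (x y : ℝ) :
    |Δ (K + 1) x - Δ (K + 1) y| ≤ 21 * ((K : ℝ) + 1) ^ 2 * |x - y| := by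
  refine (abs_fejer_sub_le K.succ_pos x y).trans (mul_le_mul_of_nonneg_right ?_ (abs_nonneg _))
  push_cast
  have hK : (0 : ℝ) ≤ K := K.cast_nonneg
  have hpi : π ≤ 7 / 2 := by linarith [Real.pi_lt_d2]
  calc (2 * ((K : ℝ) + 1) + 1) * (2 * π * (K + 1))
      ≤ (3 * ((K : ℝ) + 1)) * (2 * (7 / 2) * (K + 1)) := by
        gcongr; linarith
    _ = _ := by ring

lemma abs_V_sub_le (K : ℕ) (x y : ℝ) :
    |V K x - V K y| ≤ 46 * ((K : ℝ) + 1) ^ 2 * |x - y| := by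
  have hK : (0 : ℝ) ≤ K := K.cast_nonneg
  have hN : (0 : ℝ) < (K : ℝ) + 1 := by linarith
  have hpi := Real.pi_pos
  have hpi3 := Real.pi_gt_three
  set D := |x - y| with hD
  have hD0 : 0 ≤ D := abs_nonneg _
  have e1 : |(1 / ((K : ℝ) + 1)) *
      ∑ k ∈ Finset.Icc 1 K, ((k : ℝ) / (K + 1) - 1 / 2) * Δ (K + 1) (x - k / (K + 1))
      - (1 / ((K : ℝ) + 1)) *
      ∑ k ∈ Finset.Icc 1 K, ((k : ℝ) / (K + 1) - 1 / 2) * Δ (K + 1) (y - k / (K + 1))|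
      ≤ 21 * ((K : ℝ) + 1) ^ 2 * D := by
    rw [← mul_sub, ← Finset.sum_sub_distrib, abs_mul, abs_of_pos (by positivity : 0 < 1 / ((K:ℝ)+1)),
      one_div, inv_mul_le_iff₀ hN]
    calc _ ≤ ∑ k ∈ Finset.Icc 1 K, 21 * ((K : ℝ) + 1) ^ 2 * D := by
          refine (Finset.abs_sum_le_sum_abs _ _).trans (Finset.sum_le_sum fun k hk => ?_)
          rw [Finset.mem_Icc] at hk
          have hk' : (k : ℝ) ≤ K + 1 := by
            have : (k : ℝ) ≤ K := by exact_mod_cast hk.2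
            linarith
          have h1 : (k : ℝ) / (K + 1) ≤ 1 := (div_le_one hN).2 hk'
          have h0 : 0 ≤ (k : ℝ) / (K + 1) := by positivity
          have h2 : |(k : ℝ) / (K + 1) - 1 / 2| ≤ 1 := abs_le.2 ⟨by linarith, by linarith⟩
          have h3 := abs_fejer_succ_sub_le K (x - k / (K + 1)) (y - k / (K + 1))
          rw [sub_sub_sub_cancel_right, ← hD] at h3
          rw [← mul_sub, abs_mul]
          calc _ ≤ 1 * (21 * ((K : ℝ) + 1) ^ 2 * D) := by gcongr
            _ = _ := one_mul _
      _ = K * (21 * ((K : ℝ) + 1) ^ 2 * D) := by simp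
      _ ≤ _ := by gcongr; linarith
  have hs : ∀ c : ℝ, 0 ≤ c → |Real.sin (c * x) - Real.sin (c * y)| ≤ c * D := fun c hc => by
    refine (abs_sin_sub_sin_le _ _).trans ?_
    rw [← mul_sub, abs_mul, abs_of_nonneg hc]
  have e2 : |(1 / (2 * π * (K + 1))) * Real.sin (2 * π * (K + 1) * x)
      - (1 / (2 * π * (K + 1))) * Real.sin (2 * π * (K + 1) * y)| ≤ ((K : ℝ) + 1) ^ 2 * D := by
    have hc : (0 : ℝ) < 2 * π * (K + 1) := by positivity
    rw [← mul_sub, abs_mul, abs_of_pos (one_div_pos.2 hc), one_div, inv_mul_le_iff₀ hc]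
    refine (hs _ hc.le).trans (mul_le_mul_of_nonneg_left ?_ hc.le)
    exact le_mul_of_one_le_left hD0 (one_le_pow₀ (by linarith))
  have e3 : |(1 / (2 * π)) * Δ (K + 1) x * Real.sin (2 * π * x)
      - (1 / (2 * π)) * Δ (K + 1) y * Real.sin (2 * π * y)| ≤ 24 * ((K : ℝ) + 1) ^ 2 * D := by
    have hc : (0 : ℝ) < 2 * π := by positivity
    have h1 := abs_fejer_succ_sub_le K x y
    have h2 := abs_fejer_le K.succ_pos y
    push_cast at h2
    have h3 := hs _ hc.le
    have : (1 / (2 * π)) * Δ (K + 1) x * Real.sin (2 * π * x)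
      - (1 / (2 * π)) * Δ (K + 1) y * Real.sin (2 * π * y) = (2 * π)⁻¹ *
        ((Δ (K + 1) x - Δ (K + 1) y) * Real.sin (2 * π * x)
        + Δ (K + 1) y * (Real.sin (2 * π * x) - Real.sin (2 * π * y))) := by
      rw [one_div]; ring
    rw [this, abs_mul, abs_of_pos (inv_pos.2 hc), inv_mul_le_iff₀ hc]
    have h4 : |(Δ (K + 1) x - Δ (K + 1) y) * Real.sin (2 * π * x)|
        ≤ 21 * ((K : ℝ) + 1) ^ 2 * D := by
      rw [abs_mul]
      calc _ ≤ 21 * ((K : ℝ) + 1) ^ 2 * D * 1 := by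
            gcongr; exact Real.abs_sin_le_one _
        _ = _ := mul_one _
    have h5 : |Δ (K + 1) y * (Real.sin (2 * π * x) - Real.sin (2 * π * y))|
        ≤ (3 * ((K : ℝ) + 1) ^ 2) * (2 * π * D) := by
      rw [abs_mul]
      gcongr
      refine h2.trans ?_
      nlinarith
    have h6 : 21 * ((K : ℝ) + 1) ^ 2 * D ≤ 2 * π * (21 * ((K : ℝ) + 1) ^ 2 * D) :=
      le_mul_of_one_le_left (by positivity) (by linarith)
    calc _ ≤ _ := abs_add_le _ _
      _ ≤ _ := add_le_add (h4.trans h6) h5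
      _ = _ := by ring
  unfold V
  rw [abs_le] at *
  constructor <;> linarith [e1.1, e1.2, e2.1, e2.2, e3.1, e3.2]

lemma abs_B_sub_le (K : ℕ) (x y : ℝ) :
    |B K x - B K y| ≤ 67 * ((K : ℝ) + 1) ^ 2 * |x - y| := by
  have hK : (0 : ℝ) ≤ K := K.cast_nonneg
  have h1 := abs_V_sub_le K x y
  have h2 : |(1 / (2 * ((K : ℝ) + 1))) * Δ (K + 1) x - (1 / (2 * ((K : ℝ) + 1))) * Δ (K + 1) y|
      ≤ 21 * ((K : ℝ) + 1) ^ 2 * |x - y| := by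
    have hc : (0 : ℝ) < 2 * ((K : ℝ) + 1) := by positivity
    rw [← mul_sub, abs_mul, abs_of_pos (one_div_pos.2 hc), one_div, inv_mul_le_iff₀ hc]
    exact (abs_fejer_succ_sub_le K x y).trans
      (le_mul_of_one_le_left (by positivity) (by linarith))
  unfold B
  have := abs_add_le (V K x - V K y)
    ((1 / (2 * ((K : ℝ) + 1))) * Δ (K + 1) x - (1 / (2 * ((K : ℝ) + 1))) * Δ (K + 1) y)
  rw [add_sub_add_comm]
  linarith

lemma abs_Sel_sub_le (K : ℕ) (x y : ℝ) :
    |Sel K x - Sel K y| ≤ 134 * ((K : ℝ) + 1) ^ 2 * |x - y| := by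
  have h1 := abs_B_sub_le K (2 / 3 - x) (2 / 3 - y)
  have h2 := abs_B_sub_le K (x - 1 / 3) (y - 1 / 3)
  rw [sub_sub_sub_cancel_left, abs_sub_comm y x] at h1
  rw [sub_sub_sub_cancel_right] at h2
  unfold Sel
  rw [abs_le] at *
  constructor <;> linarith [h1.1, h1.2, h2.1, h2.2]

/-! ### Periodicity and continuity -/

lemma fejer_periodic (K : ℕ) : Function.Periodic (Δ K) 1 := fun x => by
  unfold Δ
  refine Finset.sum_congr rfl fun k _ => ?_
  rw [show 2 * π * k * (x + 1) = 2 * π * k * x + k * (2 * π) by ring, Real.cos_add_int_mul_two_pi]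

lemma V_periodic (K : ℕ) : Function.Periodic (V K) 1 := fun x => by
  unfold V
  have h (k : ℕ) : Δ (K + 1) (x + 1 - k / (K + 1)) = Δ (K + 1) (x - k / (K + 1)) := by
    rw [add_sub_right_comm]; exact fejer_periodic _ _
  have h2 : Real.sin (2 * π * (K + 1) * (x + 1)) = Real.sin (2 * π * (K + 1) * x) := by
    rw [← Real.sin_add_nat_mul_two_pi (2 * π * (K + 1) * x) (K + 1)]
    push_cast; ring_nf
  have h3 : Real.sin (2 * π * (x + 1)) = Real.sin (2 * π * x) := by
    rw [← Real.sin_add_two_pi (2 * π * x)]; ring_nf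
  simp only [h, h2, h3, fejer_periodic (K + 1) x]

lemma B_periodic (K : ℕ) : Function.Periodic (B K) 1 := fun x => by
  unfold B; rw [V_periodic, fejer_periodic]

lemma Sel_periodic (K : ℕ) : Function.Periodic (Sel K) 1 := fun x => by
  unfold Sel
  rw [show x + 1 - 1 / 3 = x - 1 / 3 + 1 by ring, B_periodic,
    show 2 / 3 - (x + 1) = 2 / 3 - x - 1 by ring, (B_periodic K).sub_eq]

lemma Sel_continuous (K : ℕ) : Continuous (Sel K) := by
  have h : Continuous (Δ (K + 1)) := by unfold Δ; fun_prop
  unfold Sel B V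
  fun_prop

/-! ### Measure-theoretic pigeonhole and translation modulo `1` -/

/-- The simultaneous pigeonhole principle of Dirichlet, in measure: `(0, 1]` is cut into `N ^ #A`
cells according to the positions of the fractional parts of `a x`, and one cell is large. -/
lemma exists_large_cell (A : Finset ℕ) {N : ℕ} (hN : 0 < N) :
    ∃ E ⊆ Set.Ioc (0 : ℝ) 1, ((N : ENNReal) ^ A.card)⁻¹ ≤ MeasureTheory.volume E ∧
      ∀ x ∈ E, ∀ y ∈ E, ∀ a ∈ A,
        |Int.fract ((a : ℝ) * x) - Int.fract ((a : ℝ) * y)| ≤ 1 / N := by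
  have hN' : (0 : ℝ) < N := by exact_mod_cast hN
  let cell (x : ℝ) (a : A) : Fin N := ⟨⌊(N : ℝ) * Int.fract ((a : ℝ) * x)⌋₊, by
    rw [Nat.floor_lt (mul_nonneg hN'.le (Int.fract_nonneg _))]
    exact mul_lt_of_lt_one_right hN' (Int.fract_lt_one _)⟩
  let E (c : A → Fin N) : Set ℝ := {x | x ∈ Set.Ioc (0 : ℝ) 1 ∧ cell x = c}
  have : Nonempty (Fin N) := ⟨⟨0, hN⟩⟩
  obtain ⟨c, -, hc⟩ := ENNReal.exists_le_of_sum_le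
    (s := (Finset.univ : Finset (A → Fin N))) Finset.univ_nonempty
    (f := fun _ => ((N : ENNReal) ^ A.card)⁻¹) (g := fun c => MeasureTheory.volume (E c)) (by
      calc _ = (1 : ENNReal) := by
            simp only [Finset.sum_const, Finset.card_univ, Fintype.card_fun, Fintype.card_fin,
              Fintype.card_coe, nsmul_eq_mul, Nat.cast_pow]
            refine ENNReal.mul_inv_cancel (pow_ne_zero _ (by exact_mod_cast hN.ne')) ?_
            exact ENNReal.pow_ne_top (ENNReal.natCast_ne_top N)
        _ = MeasureTheory.volume (Set.Ioc (0 : ℝ) 1) := by simp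
        _ ≤ MeasureTheory.volume (⋃ c, E c) :=
            MeasureTheory.measure_mono fun x hx => Set.mem_iUnion.2 ⟨cell x, hx, rfl⟩
        _ ≤ _ := MeasureTheory.measure_iUnion_fintype_le _ _)
  refine ⟨E c, fun x hx => hx.1, hc, fun x hx y hy a ha => ?_⟩
  have h : ⌊(N : ℝ) * Int.fract ((a : ℝ) * x)⌋₊ = ⌊(N : ℝ) * Int.fract ((a : ℝ) * y)⌋₊ := by
    have := congrFun (hx.2.trans hy.2.symm) ⟨a, ha⟩
    exact congrArg Fin.val this
  have hx0 := mul_nonneg hN'.le (Int.fract_nonneg ((a : ℝ) * x))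
  have hy0 := mul_nonneg hN'.le (Int.fract_nonneg ((a : ℝ) * y))
  have a1 := Nat.floor_le hx0
  have a2 := Nat.lt_floor_add_one ((N : ℝ) * Int.fract ((a : ℝ) * x))
  have b1 := Nat.floor_le hy0
  have b2 := Nat.lt_floor_add_one ((N : ℝ) * Int.fract ((a : ℝ) * y))
  rw [h] at a1 a2
  rw [abs_le, ← neg_div, div_le_iff₀ hN', le_div_iff₀ hN']
  constructor <;> nlinarith

/-- A `1`-periodic set has the same measure in `[0, 1)` as in `(t, t + 1]`. -/
lemma volume_inter_Ico_eq {S : Set ℝ} (hS : MeasurableSet S)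
    (hper : ∀ (m : ℤ) (x : ℝ), x + m ∈ S ↔ x ∈ S) (t : ℝ) :
    MeasureTheory.volume (S ∩ Set.Ico 0 1) = MeasureTheory.volume (S ∩ Set.Ioc t (t + 1)) := by
  have h := (isAddFundamentalDomain_Ioc one_pos 0).measure_set_eq
    (isAddFundamentalDomain_Ioc one_pos t) hS (by
      rintro ⟨g, hg⟩
      obtain ⟨m, rfl⟩ := AddSubgroup.mem_zmultiples_iff.1 hg
      ext x
      have := hper m x
      simpa [AddSubgroup.vadd_def, add_comm] using this)
  rw [zero_add] at h
  rw [← h]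
  exact MeasureTheory.measure_congr
    ((Filter.EventuallyEq.refl _ S).inter MeasureTheory.Ico_ae_eq_Ioc)

/-! ### The constants and the conclusion -/

/-- Exponential growth in `K` absorbs the Lipschitz constant, so that `N` is at most the `K`-th
power of `C δ⁻¹ n K` with `C = 4 (268 + δ)`. -/
lemma nat_ceil_le_pow {δ : ℝ} (hδ : 0 < δ) {K n : ℕ} (hK : 0 < K) (hn : 0 < n) :
    (⌈268 * ((K : ℝ) + 1) ^ 2 * n / δ⌉₊ : ℝ) ≤ (4 * (268 + δ) * δ⁻¹ * n * K) ^ K := by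
  have hK1 : (1 : ℝ) ≤ K := by exact_mod_cast hK
  have hn1 : (1 : ℝ) ≤ n := by exact_mod_cast hn
  have h2 : (K : ℝ) + 1 ≤ 2 ^ K := by exact_mod_cast K.lt_two_pow_self
  have h4 : ((K : ℝ) + 1) ^ 2 ≤ 4 ^ K := by
    calc ((K : ℝ) + 1) ^ 2 ≤ (2 ^ K) ^ 2 := by gcongr
      _ = 4 ^ K := by rw [← pow_mul, mul_comm, pow_mul]; norm_num
  have hG : 1 ≤ (268 + δ) * δ⁻¹ := by
    rw [← div_eq_mul_inv, one_le_div hδ]; linarith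
  have h1 : (1 : ℝ) ≤ 4 ^ K * n := by
    have : (1 : ℝ) ≤ 4 ^ K := one_le_pow₀ (by norm_num)
    nlinarith
  calc (⌈268 * ((K : ℝ) + 1) ^ 2 * n / δ⌉₊ : ℝ)
      ≤ 268 * ((K : ℝ) + 1) ^ 2 * n / δ + 1 := (Nat.ceil_lt_add_one (by positivity)).le
    _ ≤ 268 * 4 ^ K * n / δ + 4 ^ K * n := by gcongr
    _ = 4 ^ K * ((268 + δ) * δ⁻¹) * n * 1 := by field_simp
    _ ≤ 4 ^ K * ((268 + δ) * δ⁻¹) ^ K * n ^ K * K ^ K := by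
        gcongr
        · exact le_self_pow₀ hG hK.ne'
        · exact le_self_pow₀ hn1 hK.ne'
        · exact one_le_pow₀ hK1
    _ = _ := by simp only [← mul_pow]; ring

theorem measure_of_near_maximum_set (δ : ℝ) (hδ : 0 < δ) :
    ∃ C : ℝ, 0 < C ∧
      ∀ K : ℕ, 0 < K →
        ∀ A : Finset ℕ, A.Nonempty → (∀ a ∈ A, 0 < a) →
          ∀ n : ℕ, A.card = n →
            ∀ M : ℝ, M = sSup (Set.range fun x : ℝ => ∑ a ∈ A, Sel K (a * x)) →
              ENNReal.ofReal (Real.exp (-((K : ℝ) * n * Real.log (C * δ⁻¹ * n * K)))) ≤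
                MeasureTheory.volume
                  {x : ℝ | x ∈ Set.Ico (0 : ℝ) 1 ∧ M - δ ≤ ∑ a ∈ A, Sel K (a * x)} := by
  refine ⟨4 * (268 + δ), by positivity, ?_⟩
  intro K hK A hA _ n hn M hM
  have hn0 : 0 < n := hn ▸ hA.card_pos
  have hK' : (0 : ℝ) < K := by exact_mod_cast hK
  have hn' : (0 : ℝ) < n := by exact_mod_cast hn0
  set f : ℝ → ℝ := fun x => ∑ a ∈ A, Sel K (a * x) with hf
  set X : ℝ := 4 * (268 + δ) * δ⁻¹ * n * K with hX
  have hX0 : 0 < X := by positivity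
  set N : ℕ := ⌈268 * ((K : ℝ) + 1) ^ 2 * n / δ⌉₊ with hNdef
  have hN : 0 < N := Nat.ceil_pos.2 (by positivity)
  have hN' : (0 : ℝ) < N := by exact_mod_cast hN
  have hNX : (N : ℝ) ≤ X ^ K := nat_ceil_le_pow hδ hK hn0
  have hNδ : n * (134 * ((K : ℝ) + 1) ^ 2 * (1 / N)) ≤ δ / 2 := by
    have h := Nat.le_ceil (268 * ((K : ℝ) + 1) ^ 2 * n / δ)
    rw [← hNdef, div_le_iff₀ hδ] at h
    rw [← mul_assoc, mul_one_div, div_le_iff₀ hN']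
    linarith
  have hbound : ENNReal.ofReal (Real.exp (-((K : ℝ) * n * Real.log X)))
      ≤ ((N : ENNReal) ^ n)⁻¹ := by
    have h1 : Real.exp (-((K : ℝ) * n * Real.log X)) = ((X ^ K) ^ n)⁻¹ := by
      rw [Real.exp_neg, ← pow_mul, ← Real.exp_log (pow_pos hX0 (K * n)), Real.log_pow]
      push_cast; rfl
    have h2 : ((N : ENNReal) ^ n)⁻¹ = ENNReal.ofReal (((N : ℝ) ^ n)⁻¹) := by
      rw [ENNReal.ofReal_inv_of_pos (by positivity), ENNReal.ofReal_pow hN'.le,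
        ENNReal.ofReal_natCast]
    rw [h1, h2]
    apply ENNReal.ofReal_le_ofReal
    gcongr
  obtain ⟨E, hEI, hEvol, hE⟩ := exists_large_cell A hN
  rw [hn] at hEvol
  obtain ⟨x₀, hx₀⟩ : E.Nonempty := by
    by_contra h
    rw [Set.not_nonempty_iff_eq_empty] at h
    rw [h, MeasureTheory.measure_empty, nonpos_iff_eq_zero, ENNReal.inv_eq_zero] at hEvol
    exact ENNReal.pow_ne_top (ENNReal.natCast_ne_top N) hEvol
  obtain ⟨_, ⟨x₁, rfl⟩, hx₁⟩ := exists_lt_of_lt_csSup (Set.range_nonempty f)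
    (show M - δ / 2 < sSup (Set.range f) by rw [← hM]; linarith)
  set t := x₁ - x₀ with ht
  have hSelInt (m : ℤ) (x : ℝ) : Sel K (x + m) = Sel K x := by
    simpa using (Sel_periodic K).int_mul m x
  have hclose : ∀ x ∈ E, M - δ ≤ f (x + t) := by
    intro x hx
    have hterm : ∀ a ∈ A, |Sel K (a * (x + t)) - Sel K (a * x₁)|
        ≤ 134 * ((K : ℝ) + 1) ^ 2 * (1 / N) := by
      intro a ha
      have e : (a : ℝ) * (x + t) = (a * x₁ + (Int.fract ((a : ℝ) * x) - Int.fract ((a : ℝ) * x₀)))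
          + ((⌊(a : ℝ) * x⌋ - ⌊(a : ℝ) * x₀⌋ : ℤ) : ℝ) := by
        rw [ht, Int.fract, Int.fract]; push_cast; ring
      rw [e, hSelInt]
      refine (abs_Sel_sub_le _ _ _).trans ?_
      rw [add_sub_cancel_left]
      gcongr
      exact hE x hx x₀ hx₀ a ha
    have hsum : |f (x + t) - f x₁| ≤ δ / 2 := by
      rw [hf]
      simp only
      rw [← Finset.sum_sub_distrib]
      refine (Finset.abs_sum_le_sum_abs _ _).trans ((Finset.sum_le_sum hterm).trans ?_)
      rwa [Finset.sum_const, hn, nsmul_eq_mul]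
    linarith [(abs_le.1 hsum).1]
  have hcont : Continuous f :=
    continuous_finsetSum _ fun a _ => (Sel_continuous K).comp (continuous_const.mul continuous_id)
  have hset : {x : ℝ | x ∈ Set.Ico (0 : ℝ) 1 ∧ M - δ ≤ f x}
      = {x | M - δ ≤ f x} ∩ Set.Ico 0 1 := by
    ext x; exact and_comm
  rw [hset, volume_inter_Ico_eq (measurableSet_le measurable_const hcont.measurable) ?_ t]
  · refine hbound.trans (hEvol.trans ?_)
    rw [← MeasureTheory.measure_preimage_add_right MeasureTheory.volume t
      ({x | M - δ ≤ f x} ∩ Set.Ioc t (t + 1))]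
    refine MeasureTheory.measure_mono fun x hx => ⟨hclose x hx, ?_, ?_⟩
    · linarith [(hEI hx).1]
    · linarith [(hEI hx).2]
  · intro m x
    have : f (x + m) = f x := Finset.sum_congr rfl fun a _ => by
      have := hSelInt (a * m) (a * x)
      push_cast at this
      rw [mul_add, this]
    simp only [Set.mem_ofPred_eq, this]
end

section
/- Let A be a finite nonempty set of positive integers. Then there exists x ∈ ℝ with f_A(x) > 0. -/
/-!
Let `P = ∏ a ∈ A, a` and average `fA A` over the points `k / (3 P)`, `0 ≤ k < 3 P`. For `a ∈ A`
write `P = a m`; the points `a k / (3 P) = k / (3 m)` run through `a` complete periods, each of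
them a union of triples `y, y + 1/3, y + 2/3`, on which the values of `f` sum to zero
(`f_add_third`). So the average of `fA A` over these points vanishes, while the value at `k = 0`
is `-|A| / 3 < 0`; hence some other value is positive.
-/

/-- `f x = 2/3` if the fractional part of `x` lies in `[1/3, 2/3)`, and `-1/3` otherwise. -/
noncomputable def f (x : ℝ) : ℝ :=
  if Int.fract x ∈ Set.Ico (1/3 : ℝ) (2/3 : ℝ) then 2/3 else -1/3

/-- `fA A x = ∑_{a ∈ A} f (a x)`. -/
noncomputable def fA (A : Finset ℕ) (x : ℝ) : ℝ := ∑ a ∈ A, f (a * x)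

/-- Exactly one of `x`, `x + 1/3`, `x + 2/3` has its fractional part in `[1/3, 2/3)`. -/
theorem f_add_third (x : ℝ) : f x + f (x + 1/3) + f (x + 2/3) = 0 := by
  have h0 := Int.floor_add_fract x
  have h1 := Int.fract_nonneg x
  have h2 := Int.fract_lt_one x
  have key : ∀ (y b : ℝ) (z : ℤ), 0 ≤ b → b < 1 → y = z + b → Int.fract y = b :=
    fun y b z hb hb' hy => Int.fract_eq_iff.2 ⟨hb, hb', z, by linarith⟩
  unfold f
  generalize Int.fract x = t at *
  generalize ⌊x⌋ = n at *
  rcases lt_or_ge t (1/3) with h | h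
  · rw [key (x + 1/3) (t + 1/3) n (by linarith) (by linarith) (by linarith),
      key (x + 2/3) (t + 2/3) n (by linarith) (by linarith) (by linarith),
      if_neg (fun h' => by linarith [h'.1]), if_pos ⟨by linarith, by linarith⟩,
      if_neg (fun h' => by linarith [h'.2])]
    norm_num
  rcases lt_or_ge t (2/3) with h' | h'
  · rw [key (x + 1/3) (t + 1/3) n (by linarith) (by linarith) (by linarith),
      key (x + 2/3) (t - 1/3) (n + 1) (by linarith) (by linarith) (by push_cast; linarith),
      if_pos ⟨by linarith, by linarith⟩, if_neg (fun h' => by linarith [h'.2]),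
      if_neg (fun h' => by linarith [h'.1])]
    norm_num
  · rw [key (x + 1/3) (t - 2/3) (n + 1) (by linarith) (by linarith) (by push_cast; linarith),
      key (x + 2/3) (t - 1/3) (n + 1) (by linarith) (by linarith) (by push_cast; linarith),
      if_neg (fun h' => by linarith [h'.2]), if_neg (fun h' => by linarith [h'.1]),
      if_pos ⟨by linarith, by linarith⟩]
    norm_num

theorem sum_f_periods (m : ℕ) (hm : 0 < m) (j : ℕ) :
    ∑ k ∈ Finset.range (j * (3 * m)), f ((k : ℝ) / (3 * m)) = 0 := by
  have hm' : (m : ℝ) ≠ 0 := by positivity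
  induction j with
  | zero => simp
  | succ j ih =>
    -- The new period is cut into three blocks of length `m`, i.e. shifted by thirds.
    rw [show (j + 1) * (3 * m) = j * (3 * m) + m + m + m by ring, Finset.sum_range_add,
      Finset.sum_range_add, Finset.sum_range_add, ih, zero_add, ← Finset.sum_add_distrib,
      ← Finset.sum_add_distrib]
    refine Finset.sum_eq_zero fun k _ => ?_
    rw [← f_add_third (((j * (3 * m) + k : ℕ) : ℝ) / (3 * m))]
    congr 2
    · congr 1
      push_cast
      field_simp
      ring
    · push_cast
      field_simp
      ring

theorem fA_positive_somewhere (A : Finset ℕ) (hne : A.Nonempty)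
    (hpos : ∀ a ∈ A, 0 < a) :
    ∃ x : ℝ, 0 < fA A x := by
  by_contra! hcon
  have hP : 0 < ∏ a ∈ A, a := Finset.prod_pos hpos
  set P := ∏ a ∈ A, a with hPdef
  have hsum : ∑ k ∈ Finset.range (3 * P), fA A ((k : ℝ) / (3 * P)) = 0 := by
    unfold fA
    rw [Finset.sum_comm]
    refine Finset.sum_eq_zero fun a ha => ?_
    obtain ⟨m, hm⟩ : a ∣ P := Finset.dvd_prod_of_mem (fun a => a) ha
    have ha0 := hpos a ha
    have hm0 : 0 < m := Nat.pos_of_mul_pos_left (hm ▸ hP)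
    have ha' : (a : ℝ) ≠ 0 := by positivity
    have hm' : (m : ℝ) ≠ 0 := by positivity
    rw [← sum_f_periods m hm0 a, hm, show 3 * (a * m) = a * (3 * m) by ring]
    refine Finset.sum_congr rfl fun k _ => ?_
    congr 1
    push_cast
    field_simp
  have h0 := (Finset.sum_eq_zero_iff_of_nonpos fun k _ => hcon _).1 hsum 0
    (Finset.mem_range.2 (by positivity))
  have hf : f 0 = -1/3 := by
    unfold f
    rw [Int.fract_zero, if_neg (fun h => by linarith [h.1])]
  have hc : (0 : ℝ) < A.card := by exact_mod_cast hne.card_pos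
  simp only [fA, Nat.cast_zero, zero_div, mul_zero, hf, Finset.sum_const, nsmul_eq_mul] at h0
  linarith
end
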